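/- Second law for the net coarse-grained work per cycle (Eq. (50) of the paper): Let H_W, H_S, H_D be Hermitian matrices on ℂ^{d_W}, ℂ^{d_S}, ℂ^{d_D} and kT > 0. Let ρ_W, ρ_S be density matrices, ψ ∈ ℂ^{d_D} a unit vector, {P_x}_{x∈X} a complete orthogonal family of projections on ℂ^{d_D} with [P_x, H_D] = 0 for every x, and G a unitary on ℂ^{d_W} ⊗ ℂ^{d_S} ⊗ ℂ^{d_D} with [G, H_W ⊗ 1 ⊗ 1 + 1 ⊗ H_S ⊗ 1 + 1 ⊗ 1 ⊗ H_D] = 0. Define σ := ∑_{x∈X} (1 ⊗ 1 ⊗ P_x) G (ρ_W ⊗ ρ_S ⊗ |ψ⟩⟨ψ|) G† (1 ⊗ 1 ⊗ P_x) with marginals ρ'_W, ρ'_S, ρ'_D. Let Q ∈ ℝ satisfy Landauer's bound Q ≥ kT·S(ρ'_D), and define the work cost of erasure W_R := Re(tr[H_D(|ψ⟩⟨ψ| − ρ'_D)]) + Q and the coarse-grained work W_X := F_{H_W}(ρ'_W) − F_{H_W}(ρ_W). Then W_X − W_R ≤ F_{H_S}(ρ_S) − F_{H_S}(ρ'_S).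 -/

import Mathlib

open Matrix
open scoped Kronecker Matrix ComplexOrder

noncomputable section

/-- A density matrix: positive semidefinite with unit trace. -/
def IsDensityMatrix {n : Type*} [Fintype n] (ρ : Matrix n n ℂ) : Prop :=
  ρ.PosSemidef ∧ ρ.trace = 1

/-- von Neumann entropy `S(ρ) = -∑ λᵢ log λᵢ` (junk value 0 if not Hermitian). -/
noncomputable def vnEntropy {n : Type*} [Fintype n] [DecidableEq n]
    (ρ : Matrix n n ℂ) : ℝ :=
  if h : ρ.IsHermitian then -∑ i, (h.eigenvalues i) * Real.log (h.eigenvalues i) else 0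

/-- Non-equilibrium free energy `F(ρ) = tr(Hρ) - kT S(ρ)`. -/
noncomputable def freeEnergy {n : Type*} [Fintype n] [DecidableEq n]
    (kT : ℝ) (H ρ : Matrix n n ℂ) : ℝ :=
  (Matrix.trace (H * ρ)).re - kT * vnEntropy ρ

/-- Least eigenvalue of a Hermitian matrix (junk value 0 if not Hermitian). -/
noncomputable def lambdaMin {n : Type*} [Fintype n] [DecidableEq n]
    (H : Matrix n n ℂ) : ℝ :=
  if h : H.IsHermitian then ⨅ i, h.eigenvalues i else 0

/-- Partial trace over the second tensor factor. -/
def ptrace2 {m n : Type*} [Fintype n]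
    (σ : Matrix (m × n) (m × n) ℂ) : Matrix m m ℂ :=
  fun i j => ∑ k, σ (i, k) (j, k)

/-- Partial trace over the first tensor factor. -/
def ptrace1 {m n : Type*} [Fintype m]
    (σ : Matrix (m × n) (m × n) ℂ) : Matrix n n ℂ :=
  fun k l => ∑ i, σ (i, k) (i, l)

/-- Outer product `|v⟩⟨v|`. -/
def outer {n : Type*} (v : n → ℂ) : Matrix n n ℂ :=
  Matrix.vecMulVec v (star v)

/-- Kronecker product of vectors. -/
def kronVec {m n : Type*} (v : m → ℂ) (w : n → ℂ) : m × n → ℂ :=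
  fun p => v p.1 * w p.2

/-!
A bistochastic channel does not decrease the entropy: read in eigenbases of its input and output
it acts on spectra by a doubly stochastic matrix, and `-x log x` is concave. If its Kraus operators
also commute with the total Hamiltonian, it preserves the mean energy, so it does not increase the
total free energy. Free energy is additive on the initial product state and, by subadditivity of the
entropy, at least the sum of the free energies of the marginals at the end. The memory starts pure,
so its free energy changes by its mean energy change minus `kT` times its final entropy, and
Landauer's bound pays for exactly that entropy.
-/

/-- Shannon entropy `-∑ pᵢ log pᵢ` of a finite family of weights. -/
def shannonEntropy {α : Type*} [Fintype α] (p : α → ℝ) : ℝ :=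
  ∑ i, Real.negMulLog (p i)

/-- The completely positive map `ρ ↦ ∑ₓ Kₓ ρ Kₓ†` with Kraus operators `K`. A conjugation
`ρ ↦ U ρ U†` is the case of a family indexed by `Unit`. -/
def krausMap {n X : Type*} [Fintype n] [Fintype X] (K : X → Matrix n n ℂ) (ρ : Matrix n n ℂ) :
    Matrix n n ℂ :=
  ∑ x, K x * ρ * (K x)ᴴ

/-- Kraus operators of a bistochastic channel: one that fixes the identity and preserves the
trace. -/
structure IsBistochastic {n X : Type*} [Fintype n] [DecidableEq n] [Fintype X]
    (K : X → Matrix n n ℂ) : Prop where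
  unital : ∑ x, K x * (K x)ᴴ = 1
  trace_preserving : ∑ x, (K x)ᴴ * K x = 1

/-- The Hamiltonian `A ⊗ 1 + 1 ⊗ B` of two non-interacting systems. -/
def kroneckerSum {m n : Type*} [DecidableEq m] [DecidableEq n]
    (A : Matrix m m ℂ) (B : Matrix n n ℂ) : Matrix (m × n) (m × n) ℂ :=
  A ⊗ₖ (1 : Matrix n n ℂ) + (1 : Matrix m m ℂ) ⊗ₖ B

section Shannon

variable {α β : Type*} [Fintype α] [Fintype β]

lemma sum_map_le_sum_map_mulVec [DecidableEq α] {f : ℝ → ℝ} {s : Set ℝ}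
    (hf : ConcaveOn ℝ s f) {B : Matrix α α ℝ} (hB : B ∈ doublyStochastic ℝ α) {r : α → ℝ}
    (hr : ∀ i, r i ∈ s) :
    ∑ i, f (r i) ≤ ∑ i, f ((B *ᵥ r) i) := by
  calc ∑ j, f (r j)
      = ∑ i, ∑ j, B i j * f (r j) := by
        rw [Finset.sum_comm]
        simp only [← Finset.sum_mul, sum_col_of_mem_doublyStochastic hB, one_mul]
    _ ≤ ∑ i, f ((B *ᵥ r) i) := Finset.sum_le_sum fun i _ ↦
        hf.le_map_sum (fun _ _ ↦ nonneg_of_mem_doublyStochastic hB)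
          (sum_row_of_mem_doublyStochastic hB i) fun j _ ↦ hr j

lemma negMulLog_le_neg_mul_log_add {p q : ℝ} (hp : 0 ≤ p) (hq : 0 ≤ q) (hpq : q = 0 → p = 0) :
    Real.negMulLog p ≤ -(p * Real.log q) + (q - p) := by
  rcases hp.eq_or_lt with rfl | hp
  · simpa using hq
  have hq : 0 < q := hq.lt_of_ne' (mt hpq hp.ne')
  have hlog : Real.log q - Real.log p ≤ q / p - 1 := by
    simpa only [Real.log_div hq.ne' hp.ne'] using Real.log_le_sub_one_of_pos (div_pos hq hp)
  have hmul : p * (Real.log q - Real.log p) ≤ q - p := by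
    simpa only [mul_sub, mul_div_cancel₀ q hp.ne', mul_one] using
      mul_le_mul_of_nonneg_left hlog hp.le
  rw [Real.negMulLog]
  linarith

lemma shannonEntropy_le_neg_sum_mul_log {p q : α → ℝ} (hp : ∀ i, 0 ≤ p i) (hq : ∀ i, 0 ≤ q i)
    (hpq : ∀ i, q i = 0 → p i = 0) (hsum : ∑ i, q i ≤ ∑ i, p i) :
    shannonEntropy p ≤ -∑ i, p i * Real.log (q i) := by
  calc shannonEntropy p
      ≤ ∑ i, (-(p i * Real.log (q i)) + (q i - p i)) :=
        Finset.sum_le_sum fun i _ ↦ negMulLog_le_neg_mul_log_add (hp i) (hq i) (hpq i)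
    _ = -∑ i, p i * Real.log (q i) + (∑ i, q i - ∑ i, p i) := by
        rw [Finset.sum_add_distrib, Finset.sum_neg_distrib, Finset.sum_sub_distrib]
    _ ≤ -∑ i, p i * Real.log (q i) := by linarith

lemma shannonEntropy_le_add_marginals {p : α × β → ℝ} (hp : p ∈ stdSimplex ℝ (α × β)) :
    shannonEntropy p ≤
      shannonEntropy (fun a ↦ ∑ b, p (a, b)) + shannonEntropy (fun b ↦ ∑ a, p (a, b)) := by
  obtain ⟨hp0, hp1⟩ := hp
  set f : α → ℝ := fun a ↦ ∑ b, p (a, b)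
  set g : β → ℝ := fun b ↦ ∑ a, p (a, b)
  have hf : ∀ a, 0 ≤ f a := fun a ↦ Finset.sum_nonneg fun b _ ↦ hp0 (a, b)
  have hg : ∀ b, 0 ≤ g b := fun b ↦ Finset.sum_nonneg fun a _ ↦ hp0 (a, b)
  have hpf : ∀ i, f i.1 = 0 → p i = 0 := fun i hi ↦
    (Finset.sum_eq_zero_iff_of_nonneg fun b _ ↦ hp0 (i.1, b)).1 hi i.2 (Finset.mem_univ _)
  have hpg : ∀ i, g i.2 = 0 → p i = 0 := fun i hi ↦
    (Finset.sum_eq_zero_iff_of_nonneg fun a _ ↦ hp0 (a, i.2)).1 hi i.1 (Finset.mem_univ _)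
  have hf1 : ∑ a, f a = 1 := hp1 ▸ (Fintype.sum_prod_type p).symm
  have hg1 : ∑ b, g b = 1 := hp1 ▸ (Fintype.sum_prod_type_right p).symm
  have hfg : ∑ i : α × β, f i.1 * g i.2 = ∑ i, p i := by
    rw [Fintype.sum_prod_type]
    simp only [← Finset.mul_sum, hf1, hg1, mul_one, hp1]
  have hlog : ∀ i, p i * Real.log (f i.1 * g i.2) =
      p i * Real.log (f i.1) + p i * Real.log (g i.2) := by
    intro i
    by_cases hi : p i = 0
    · simp only [hi, zero_mul, add_zero]
    · rw [Real.log_mul (mt (hpf i) hi) (mt (hpg i) hi), mul_add]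
  calc shannonEntropy p
      ≤ -∑ i, p i * Real.log (f i.1 * g i.2) :=
        shannonEntropy_le_neg_sum_mul_log hp0 (fun i ↦ mul_nonneg (hf i.1) (hg i.2))
          (fun i hi ↦ (mul_eq_zero.1 hi).elim (hpf i) (hpg i)) hfg.le
    _ = -∑ a, f a * Real.log (f a) + -∑ b, g b * Real.log (g b) := by
        simp only [hlog, Finset.sum_add_distrib, neg_add]
        rw [Fintype.sum_prod_type, Fintype.sum_prod_type_right]
        simp only [f, g, Finset.sum_mul]
    _ = shannonEntropy f + shannonEntropy g := by
        simp only [shannonEntropy, Real.negMulLog_eq_neg, Finset.sum_neg_distrib]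

end Shannon

section Kraus

variable {m n X Y : Type*} [Fintype n] [Fintype X]

lemma krausMap_unit (U ρ : Matrix n n ℂ) : krausMap (fun _ : Unit ↦ U) ρ = U * ρ * Uᴴ := by
  simp only [krausMap, Finset.univ_unique, Finset.sum_singleton]

lemma krausMap_krausMap [Fintype Y] (K : X → Matrix n n ℂ) (L : Y → Matrix n n ℂ)
    (ρ : Matrix n n ℂ) :
    krausMap K (krausMap L ρ) = krausMap (fun p : X × Y ↦ K p.1 * L p.2) ρ := by
  simp only [krausMap, Fintype.sum_prod_type, Finset.mul_sum, Finset.sum_mul, conjTranspose_mul,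
    Matrix.mul_assoc]

lemma posSemidef_krausMap (K : X → Matrix n n ℂ) {ρ : Matrix n n ℂ} (hρ : ρ.PosSemidef) :
    (krausMap K ρ).PosSemidef :=
  posSemidef_sum _ fun x _ ↦ hρ.mul_mul_conjTranspose_same (K x)

variable [DecidableEq n]

lemma trace_mul_krausMap {K : X → Matrix n n ℂ} (hK : ∑ x, (K x)ᴴ * K x = 1)
    {H : Matrix n n ℂ} (hH : ∀ x, Commute (K x) H) (ρ : Matrix n n ℂ) :
    (H * krausMap K ρ).trace = (H * ρ).trace := by
  have hterm : ∀ x, (H * (K x * ρ * (K x)ᴴ)).trace = ((K x)ᴴ * K x * (H * ρ)).trace := by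
    intro x
    calc (H * (K x * ρ * (K x)ᴴ)).trace
        = ((K x * H) * ρ * (K x)ᴴ).trace := by rw [(hH x).eq]; simp only [Matrix.mul_assoc]
      _ = ((K x)ᴴ * ((K x * H) * ρ)).trace := trace_mul_comm _ _
      _ = ((K x)ᴴ * K x * (H * ρ)).trace := by simp only [Matrix.mul_assoc]
  rw [krausMap, Finset.mul_sum, trace_sum]
  simp only [hterm]
  rw [← trace_sum, ← Finset.sum_mul, hK, Matrix.one_mul]

protected lemma IsDensityMatrix.krausMap {K : X → Matrix n n ℂ} (hK : ∑ x, (K x)ᴴ * K x = 1)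
    {ρ : Matrix n n ℂ} (hρ : IsDensityMatrix ρ) : IsDensityMatrix (krausMap K ρ) := by
  refine ⟨posSemidef_krausMap K hρ.1, ?_⟩
  simpa only [Matrix.one_mul, hρ.2] using
    trace_mul_krausMap hK (fun x ↦ Commute.one_right (K x)) ρ

lemma isBistochastic_unit {U : Matrix n n ℂ} (hU : U ∈ unitaryGroup n ℂ) :
    IsBistochastic (fun _ : Unit ↦ U) where
  unital := (Fintype.sum_unique _).trans (mem_unitaryGroup_iff.1 hU)
  trace_preserving := (Fintype.sum_unique _).trans (mem_unitaryGroup_iff'.1 hU)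

lemma isBistochastic_of_isStarProjection {P : X → Matrix n n ℂ}
    (hP : ∀ x, IsStarProjection (P x)) (hsum : ∑ x, P x = 1) : IsBistochastic P := by
  have hsa : ∀ x, (P x)ᴴ = P x := fun x ↦ (hP x).isSelfAdjoint
  constructor <;> simpa only [hsa, (hP _).isIdempotentElem.eq] using hsum

lemma IsBistochastic.mul [Fintype Y] {K : X → Matrix n n ℂ} {L : Y → Matrix n n ℂ}
    (hK : IsBistochastic K) (hL : IsBistochastic L) :
    IsBistochastic (fun p : X × Y ↦ K p.1 * L p.2) where
  unital := by
    have hx : ∀ x, ∑ y, K x * L y * (K x * L y)ᴴ = K x * (∑ y, L y * (L y)ᴴ) * (K x)ᴴ := by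
      intro x
      simp only [Finset.mul_sum, Finset.sum_mul, conjTranspose_mul, Matrix.mul_assoc]
    simp only [Fintype.sum_prod_type, hx, hL.unital, Matrix.mul_one, hK.unital]
  trace_preserving := by
    have hy : ∀ y, ∑ x, (K x * L y)ᴴ * (K x * L y) = (L y)ᴴ * (∑ x, (K x)ᴴ * K x) * L y := by
      intro y
      simp only [Finset.mul_sum, Finset.sum_mul, conjTranspose_mul, Matrix.mul_assoc]
    simp only [Fintype.sum_prod_type_right, hy, hK.trace_preserving, Matrix.mul_one,
      hL.trace_preserving]

lemma IsBistochastic.one_kronecker [Fintype m] [DecidableEq m] {K : X → Matrix n n ℂ}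
    (hK : IsBistochastic K) : IsBistochastic (fun x ↦ (1 : Matrix m m ℂ) ⊗ₖ K x) := by
  have hsum : ∀ A : X → Matrix n n ℂ, ∑ x, (1 : Matrix m m ℂ) ⊗ₖ A x = 1 ⊗ₖ ∑ x, A x := fun A ↦
    (map_sum (kroneckerBilinear (R := ℂ) (1 : Matrix m m ℂ)) A Finset.univ).symm
  constructor
  · simp only [conjTranspose_kronecker, conjTranspose_one, ← mul_kronecker_mul, Matrix.one_mul,
      hsum, hK.unital, one_kronecker_one]
  · simp only [conjTranspose_kronecker, conjTranspose_one, ← mul_kronecker_mul, Matrix.one_mul,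
      hsum, hK.trace_preserving, one_kronecker_one]

-- The transition matrix `B i j = ∑ₓ |Kₓ i j|²` is doubly stochastic.
lemma shannonEntropy_le_diag_krausMap_diagonal {K : X → Matrix n n ℂ} (hK : IsBistochastic K)
    {r : n → ℝ} (hr : ∀ i, 0 ≤ r i) :
    shannonEntropy r ≤
      shannonEntropy fun i ↦ (krausMap K (diagonal fun j ↦ (r j : ℂ)) i i).re := by
  set B : Matrix n n ℝ := of fun i j ↦ ∑ x, Complex.normSq (K x i j) with hB_def
  have hrow : ∀ i, ∑ j, B i j = 1 := by
    intro i
    have h := congrFun₂ hK.unital i i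
    simp only [Matrix.sum_apply, mul_apply, conjTranspose_apply, RCLike.star_def,
      Complex.mul_conj, one_apply_eq] at h
    rw [Finset.sum_comm] at h
    exact_mod_cast h
  have hcol : ∀ j, ∑ i, B i j = 1 := by
    intro j
    have h := congrFun₂ hK.trace_preserving j j
    simp only [Matrix.sum_apply, mul_apply, conjTranspose_apply, RCLike.star_def,
      ← Complex.normSq_eq_conj_mul_self, one_apply_eq] at h
    rw [Finset.sum_comm] at h
    exact_mod_cast h
  have hB : B ∈ doublyStochastic ℝ n := mem_doublyStochastic_iff_sum.2
    ⟨fun i j ↦ Finset.sum_nonneg fun x _ ↦ Complex.normSq_nonneg _, hrow, hcol⟩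
  have hdiag : ∀ i, (krausMap K (diagonal fun j ↦ (r j : ℂ)) i i).re = (B *ᵥ r) i := by
    intro i
    have hterm : ∀ x j, (K x i j * (r j : ℂ) * star (K x i j)).re =
        Complex.normSq (K x i j) * r j := by
      intro x j
      rw [mul_right_comm, RCLike.star_def, Complex.mul_conj, ← Complex.ofReal_mul,
        Complex.ofReal_re]
    simp only [krausMap, Matrix.sum_apply, mul_apply (M := _ * _), mul_diagonal,
      conjTranspose_apply, Complex.re_sum, hterm, mulVec, dotProduct, hB_def, of_apply,
      Finset.sum_mul]
    exact Finset.sum_comm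
  simpa only [shannonEntropy, hdiag] using
    sum_map_le_sum_map_mulVec Real.concaveOn_negMulLog hB hr

end Kraus

section DensityMatrix

variable {n : Type*} [Fintype n]

lemma IsDensityMatrix.re_diag_mem_stdSimplex {ρ : Matrix n n ℂ} (hρ : IsDensityMatrix ρ) :
    (fun i ↦ (ρ i i).re) ∈ stdSimplex ℝ n := by
  refine ⟨fun i ↦ (Complex.nonneg_iff.1 (hρ.1.diag_nonneg (i := i))).1, ?_⟩
  have htrace : (∑ i, ρ i i).re = 1 := by
    simpa only [Matrix.trace, diag_apply, Complex.one_re] using congrArg Complex.re hρ.2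
  rwa [Complex.re_sum] at htrace

lemma isStarProjection_outer {ψ : n → ℂ} (hψ : star ψ ⬝ᵥ ψ = 1) :
    IsStarProjection (outer ψ) where
  isIdempotentElem := by
    rw [IsIdempotentElem, outer, vecMulVec_mul_vecMulVec, hψ, one_smul]
  isSelfAdjoint := (posSemidef_vecMulVec_self_star ψ).1

lemma isDensityMatrix_outer {ψ : n → ℂ} (hψ : star ψ ⬝ᵥ ψ = 1) :
    IsDensityMatrix (outer ψ) := by
  refine ⟨posSemidef_vecMulVec_self_star ψ, ?_⟩
  rw [outer, trace_vecMulVec, dotProduct_comm, hψ]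

end DensityMatrix

section VonNeumann

variable {n : Type*} [Fintype n] [DecidableEq n]

lemma vnEntropy_eq_shannonEntropy_eigenvalues {A : Matrix n n ℂ} (hA : A.IsHermitian) :
    vnEntropy A = shannonEntropy hA.eigenvalues := by
  simp only [vnEntropy, dif_pos hA, shannonEntropy, Real.negMulLog_eq_neg, Finset.sum_neg_distrib]

lemma krausMap_eigenvectorUnitary_diagonal {A : Matrix n n ℂ} (hA : A.IsHermitian) :
    krausMap (fun _ : Unit ↦ (hA.eigenvectorUnitary : Matrix n n ℂ))
      (diagonal fun i ↦ (hA.eigenvalues i : ℂ)) = A :=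
  (krausMap_unit _ _).trans hA.spectral_theorem.symm

lemma krausMap_eigenvectorUnitary_conjTranspose {A : Matrix n n ℂ} (hA : A.IsHermitian) :
    krausMap (fun _ : Unit ↦ (hA.eigenvectorUnitary : Matrix n n ℂ)ᴴ) A =
      diagonal fun i ↦ (hA.eigenvalues i : ℂ) := by
  rw [krausMap_unit, conjTranspose_conjTranspose]
  simpa only [Unitary.conjStarAlgAut_apply, Unitary.coe_star, star_eq_conjTranspose,
    conjTranspose_conjTranspose, Complex.coe_algebraMap, Function.comp_def] using
    hA.conjStarAlgAut_star_eigenvectorUnitary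

lemma vnEntropy_krausMap_unit_diagonal {U : Matrix n n ℂ} (hU : U ∈ unitaryGroup n ℂ)
    (r : n → ℝ) :
    vnEntropy (krausMap (fun _ : Unit ↦ U) (diagonal fun i ↦ (r i : ℂ))) = shannonEntropy r := by
  set A := krausMap (fun _ : Unit ↦ U) (diagonal fun i ↦ (r i : ℂ)) with hA_def
  have hA : A.IsHermitian := by
    rw [hA_def, krausMap_unit]
    exact isHermitian_mul_mul_conjTranspose U (isHermitian_diagonal_of_self_adjoint _
      (funext fun i ↦ Complex.conj_ofReal _))
  have hcharpoly : A.charpoly = (diagonal fun i ↦ (r i : ℂ)).charpoly := by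
    rw [hA_def, krausMap_unit, charpoly_mul_comm, ← Matrix.mul_assoc,
      show Uᴴ * U = 1 from mem_unitaryGroup_iff'.1 hU, Matrix.one_mul]
  have hroots : Finset.univ.val.map hA.eigenvalues = Finset.univ.val.map r := by
    have h := hA.roots_charpoly_eq_eigenvalues
    rw [hcharpoly, charpoly_diagonal, Polynomial.roots_prod _ _
      (Finset.prod_ne_zero_iff.2 fun i _ ↦ Polynomial.X_sub_C_ne_zero _)] at h
    have h' := congrArg (Multiset.map Complex.re) h
    simpa only [Complex.coe_algebraMap, Function.comp_apply, Multiset.map_map, Complex.ofReal_re,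
      Polynomial.roots_X_sub_C, Multiset.bind_singleton] using h'.symm
  rw [vnEntropy_eq_shannonEntropy_eigenvalues hA]
  simpa only [shannonEntropy, Finset.sum, Multiset.map_map, Function.comp_def] using
    congrArg (fun s ↦ (s.map Real.negMulLog).sum) hroots

lemma vnEntropy_eq_zero_of_isStarProjection {P : Matrix n n ℂ} (hP : IsStarProjection P) :
    vnEntropy P = 0 := by
  have hherm : P.IsHermitian := hP.isSelfAdjoint
  rw [vnEntropy_eq_shannonEntropy_eigenvalues hherm]
  refine Finset.sum_eq_zero fun i _ ↦ ?_
  have hspec : hherm.eigenvalues i = 0 ∨ hherm.eigenvalues i = 1 :=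
    hP.isIdempotentElem.spectrum_subset ℝ (hherm.eigenvalues_mem_spectrum_real i)
  rcases hspec with h | h
  · rw [h, Real.negMulLog_zero]
  · rw [h, Real.negMulLog_one]

lemma vnEntropy_le_diag_krausMap {X : Type*} [Fintype X] {K : X → Matrix n n ℂ}
    (hK : IsBistochastic K) {ρ : Matrix n n ℂ} (hρ : ρ.PosSemidef) :
    vnEntropy ρ ≤ shannonEntropy fun i ↦ (krausMap K ρ i i).re := by
  have hdiag := shannonEntropy_le_diag_krausMap_diagonal
    (hK.mul (isBistochastic_unit hρ.1.eigenvectorUnitary.2)) hρ.eigenvalues_nonneg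
  rwa [← krausMap_krausMap K fun _ : Unit ↦ (hρ.1.eigenvectorUnitary : Matrix n n ℂ),
    krausMap_eigenvectorUnitary_diagonal,
    ← vnEntropy_eq_shannonEntropy_eigenvalues] at hdiag

lemma vnEntropy_le_vnEntropy_krausMap {X : Type*} [Fintype X] {K : X → Matrix n n ℂ}
    (hK : IsBistochastic K) {ρ : Matrix n n ℂ} (hρ : ρ.PosSemidef) :
    vnEntropy ρ ≤ vnEntropy (krausMap K ρ) := by
  have hσ : (krausMap K ρ).IsHermitian := (posSemidef_krausMap K hρ).1
  have hdiag := vnEntropy_le_diag_krausMap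
    ((isBistochastic_unit (Unitary.star_mem hσ.eigenvectorUnitary.2)).mul hK) hρ
  rw [← krausMap_krausMap (fun _ : Unit ↦ star (hσ.eigenvectorUnitary : Matrix n n ℂ)) K,
    star_eq_conjTranspose, krausMap_eigenvectorUnitary_conjTranspose] at hdiag
  simpa only [diagonal_apply_eq, Complex.ofReal_re,
    ← vnEntropy_eq_shannonEntropy_eigenvalues] using hdiag

end VonNeumann

section KroneckerSum

variable {l m n : Type*} [DecidableEq l] [DecidableEq m] [DecidableEq n]

lemma kroneckerSum_kroneckerSum (A : Matrix l l ℂ) (B : Matrix m m ℂ)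
    (C : Matrix n n ℂ) :
    kroneckerSum A (kroneckerSum B C) =
      A ⊗ₖ ((1 : Matrix m m ℂ) ⊗ₖ (1 : Matrix n n ℂ)) +
        (1 : Matrix l l ℂ) ⊗ₖ (B ⊗ₖ (1 : Matrix n n ℂ)) +
          (1 : Matrix l l ℂ) ⊗ₖ ((1 : Matrix m m ℂ) ⊗ₖ C) := by
  rw [kroneckerSum, kroneckerSum, kronecker_add, one_kronecker_one, add_assoc]

lemma commute_one_kronecker_kroneckerSum [Fintype m] [Fintype n] (A : Matrix m m ℂ)
    {B C : Matrix n n ℂ} (hBC : Commute B C) :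
    Commute ((1 : Matrix m m ℂ) ⊗ₖ B) (kroneckerSum A C) := by
  simp only [commute_iff_eq, kroneckerSum, mul_add, add_mul, ← mul_kronecker_mul, Matrix.one_mul,
    Matrix.mul_one, hBC.eq]

end KroneckerSum

section PartialTrace

variable {m n : Type*}

lemma trace_ptrace2 [Fintype m] [Fintype n] (s : Matrix (m × n) (m × n) ℂ) :
    (ptrace2 s).trace = s.trace := by
  simp only [Matrix.trace, diag_apply, ptrace2, Fintype.sum_prod_type]

lemma trace_ptrace1 [Fintype m] [Fintype n] (s : Matrix (m × n) (m × n) ℂ) :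
    (ptrace1 s).trace = s.trace := by
  simp only [Matrix.trace, diag_apply, ptrace1, Fintype.sum_prod_type_right]

lemma ptrace2_kronecker [Fintype n] (A : Matrix m m ℂ) (B : Matrix n n ℂ) :
    ptrace2 (A ⊗ₖ B) = B.trace • A := by
  ext i j
  simp only [ptrace2, kroneckerMap_apply, ← Finset.mul_sum, Matrix.smul_apply, smul_eq_mul,
    Matrix.trace, diag_apply, mul_comm]

lemma ptrace1_kronecker [Fintype m] (A : Matrix m m ℂ) (B : Matrix n n ℂ) :
    ptrace1 (A ⊗ₖ B) = A.trace • B := by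
  ext i j
  simp only [ptrace1, kroneckerMap_apply, ← Finset.sum_mul, Matrix.smul_apply, smul_eq_mul,
    Matrix.trace, diag_apply]

lemma ptrace1_eq_ptrace2_submatrix_swap [Fintype m] (s : Matrix (m × n) (m × n) ℂ) :
    ptrace1 s = ptrace2 (s.submatrix Prod.swap Prod.swap) := rfl

lemma kronecker_submatrix_swap (A : Matrix m m ℂ) (B : Matrix n n ℂ) :
    (A ⊗ₖ B).submatrix Prod.swap Prod.swap = B ⊗ₖ A := by
  ext i j
  simp only [submatrix_apply, kroneckerMap_apply, Prod.fst_swap, Prod.snd_swap, mul_comm]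

variable [Fintype m] [Fintype n]

lemma ptrace2_kronecker_one_mul [DecidableEq n] (A : Matrix m m ℂ)
    (s : Matrix (m × n) (m × n) ℂ) :
    ptrace2 (A ⊗ₖ (1 : Matrix n n ℂ) * s) = A * ptrace2 s := by
  ext i j
  simp only [ptrace2, mul_apply, kroneckerMap_apply, Fintype.sum_prod_type, one_apply, mul_ite,
    mul_one, mul_zero, ite_mul, zero_mul, Finset.sum_ite_eq, Finset.mem_univ, if_true,
    Finset.mul_sum]
  exact Finset.sum_comm

lemma ptrace2_mul_kronecker_one [DecidableEq n] (A : Matrix m m ℂ)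
    (s : Matrix (m × n) (m × n) ℂ) :
    ptrace2 (s * A ⊗ₖ (1 : Matrix n n ℂ)) = ptrace2 s * A := by
  ext i j
  simp only [ptrace2, mul_apply, kroneckerMap_apply, Fintype.sum_prod_type, one_apply, mul_ite,
    mul_one, mul_zero, Finset.sum_ite_eq', Finset.mem_univ, if_true, Finset.sum_mul]
  exact Finset.sum_comm

lemma ptrace2_one_kronecker_mul_comm [DecidableEq m] (B : Matrix n n ℂ)
    (s : Matrix (m × n) (m × n) ℂ) :
    ptrace2 ((1 : Matrix m m ℂ) ⊗ₖ B * s) = ptrace2 (s * (1 : Matrix m m ℂ) ⊗ₖ B) := by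
  ext i j
  simp only [ptrace2, mul_apply, kroneckerMap_apply, Fintype.sum_prod_type_right, one_apply,
    mul_ite, mul_zero, ite_mul, zero_mul, Finset.sum_ite_eq', Finset.sum_ite_eq,
    Finset.mem_univ, if_true, mul_comm]
  exact Finset.sum_comm

lemma ptrace2_conj_kronecker [DecidableEq n] {B : Matrix n n ℂ} (hB : Bᴴ * B = 1)
    (A : Matrix m m ℂ) (s : Matrix (m × n) (m × n) ℂ) :
    ptrace2 (A ⊗ₖ B * s * (A ⊗ₖ B)ᴴ) = A * ptrace2 s * Aᴴ := by
  classical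
  have hleft : A ⊗ₖ B = A ⊗ₖ (1 : Matrix n n ℂ) * (1 : Matrix m m ℂ) ⊗ₖ B := by
    rw [← mul_kronecker_mul, Matrix.mul_one, Matrix.one_mul]
  have hright : (A ⊗ₖ B)ᴴ = (1 : Matrix m m ℂ) ⊗ₖ Bᴴ * Aᴴ ⊗ₖ (1 : Matrix n n ℂ) := by
    rw [conjTranspose_kronecker, ← mul_kronecker_mul, Matrix.mul_one, Matrix.one_mul]
  calc ptrace2 (A ⊗ₖ B * s * (A ⊗ₖ B)ᴴ)
      = ptrace2 (A ⊗ₖ (1 : Matrix n n ℂ) *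
          ((1 : Matrix m m ℂ) ⊗ₖ B * (s * (1 : Matrix m m ℂ) ⊗ₖ Bᴴ)) *
            Aᴴ ⊗ₖ (1 : Matrix n n ℂ)) := by
        rw [hright, hleft]; simp only [Matrix.mul_assoc]
    _ = A * ptrace2 (s * ((1 : Matrix m m ℂ) ⊗ₖ Bᴴ * (1 : Matrix m m ℂ) ⊗ₖ B)) * Aᴴ := by
        rw [ptrace2_mul_kronecker_one, ptrace2_kronecker_one_mul, ptrace2_one_kronecker_mul_comm,
          Matrix.mul_assoc s]
    _ = A * ptrace2 s * Aᴴ := by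
        rw [← mul_kronecker_mul, hB, Matrix.one_mul, one_kronecker_one, Matrix.mul_one]

lemma ptrace1_conj_kronecker [DecidableEq m] {A : Matrix m m ℂ} (hA : Aᴴ * A = 1)
    (B : Matrix n n ℂ) (s : Matrix (m × n) (m × n) ℂ) :
    ptrace1 (A ⊗ₖ B * s * (A ⊗ₖ B)ᴴ) = B * ptrace1 s * Bᴴ := by
  have hswap : (A ⊗ₖ B * s * (A ⊗ₖ B)ᴴ).submatrix Prod.swap Prod.swap =
      B ⊗ₖ A * s.submatrix Prod.swap Prod.swap * (B ⊗ₖ A)ᴴ := by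
    rw [← kronecker_submatrix_swap A B, conjTranspose_submatrix,
      submatrix_mul _ _ _ _ _ Prod.swap_bijective, submatrix_mul _ _ _ _ _ Prod.swap_bijective]
  rw [ptrace1_eq_ptrace2_submatrix_swap, hswap, ptrace2_conj_kronecker hA,
    ← ptrace1_eq_ptrace2_submatrix_swap]

lemma ptrace1_one_kronecker_mul [DecidableEq m] (B : Matrix n n ℂ)
    (s : Matrix (m × n) (m × n) ℂ) :
    ptrace1 ((1 : Matrix m m ℂ) ⊗ₖ B * s) = B * ptrace1 s := by
  rw [ptrace1_eq_ptrace2_submatrix_swap, submatrix_mul _ _ _ _ _ Prod.swap_bijective,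
    kronecker_submatrix_swap, ptrace2_kronecker_one_mul, ← ptrace1_eq_ptrace2_submatrix_swap]

lemma trace_kroneckerSum_mul [DecidableEq m] [DecidableEq n] (A : Matrix m m ℂ)
    (B : Matrix n n ℂ) (s : Matrix (m × n) (m × n) ℂ) :
    (kroneckerSum A B * s).trace = (A * ptrace2 s).trace + (B * ptrace1 s).trace := by
  rw [kroneckerSum, Matrix.add_mul, trace_add, ← ptrace2_kronecker_one_mul, trace_ptrace2,
    ← ptrace1_one_kronecker_mul, trace_ptrace1]

end PartialTrace

section CompositeSystem

variable {m n : Type*} [Fintype m] [Fintype n]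

protected lemma IsDensityMatrix.kronecker {ρ : Matrix m m ℂ} {τ : Matrix n n ℂ}
    (hρ : IsDensityMatrix ρ) (hτ : IsDensityMatrix τ) : IsDensityMatrix (ρ ⊗ₖ τ) := by
  classical
  exact ⟨hρ.1.kronecker hτ.1, by rw [trace_kronecker, hρ.2, hτ.2, mul_one]⟩

protected lemma IsDensityMatrix.ptrace2 {σ : Matrix (m × n) (m × n) ℂ} (hσ : IsDensityMatrix σ) :
    IsDensityMatrix (ptrace2 σ) := by
  have hsum : ptrace2 σ = ∑ k, σ.submatrix (·, k) (·, k) := by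
    ext i j
    simp only [ptrace2, Matrix.sum_apply, submatrix_apply]
  exact ⟨hsum ▸ posSemidef_sum _ fun k _ ↦ hσ.1.submatrix _, (trace_ptrace2 σ).trans hσ.2⟩

protected lemma IsDensityMatrix.ptrace1 {σ : Matrix (m × n) (m × n) ℂ} (hσ : IsDensityMatrix σ) :
    IsDensityMatrix (ptrace1 σ) := by
  have hsum : ptrace1 σ = ∑ i, σ.submatrix (i, ·) (i, ·) := by
    ext k l
    simp only [ptrace1, Matrix.sum_apply, submatrix_apply]
  exact ⟨hsum ▸ posSemidef_sum _ fun i _ ↦ hσ.1.submatrix _, (trace_ptrace1 σ).trans hσ.2⟩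

variable [DecidableEq m] [DecidableEq n]

lemma vnEntropy_kronecker {A : Matrix m m ℂ} {B : Matrix n n ℂ} (hA : A.IsHermitian)
    (hB : B.IsHermitian) :
    vnEntropy (A ⊗ₖ B) = B.trace.re * vnEntropy A + A.trace.re * vnEntropy B := by
  set a := hA.eigenvalues
  set b := hB.eigenvalues
  have hAB : A ⊗ₖ B = krausMap
      (fun _ : Unit ↦ (hA.eigenvectorUnitary : Matrix m m ℂ) ⊗ₖ
        (hB.eigenvectorUnitary : Matrix n n ℂ))
      (diagonal fun i : m × n ↦ ((a i.1 * b i.2 : ℝ) : ℂ)) := by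
    conv_lhs => rw [← krausMap_eigenvectorUnitary_diagonal hA,
      ← krausMap_eigenvectorUnitary_diagonal hB]
    simp only [krausMap_unit, conjTranspose_kronecker, mul_kronecker_mul,
      diagonal_kronecker_diagonal, Complex.ofReal_mul, a, b]
  have htrA : A.trace.re = ∑ i, a i := by
    rw [hA.trace_eq_sum_eigenvalues, Complex.re_sum]; rfl
  have htrB : B.trace.re = ∑ j, b j := by
    rw [hB.trace_eq_sum_eigenvalues, Complex.re_sum]; rfl
  rw [hAB, vnEntropy_krausMap_unit_diagonal
      (kronecker_mem_unitary hA.eigenvectorUnitary.2 hB.eigenvectorUnitary.2),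
    vnEntropy_eq_shannonEntropy_eigenvalues hA, vnEntropy_eq_shannonEntropy_eigenvalues hB,
    htrA, htrB]
  simp only [shannonEntropy, Fintype.sum_prod_type, Real.negMulLog_mul, Finset.sum_add_distrib,
    ← Finset.sum_mul, ← Finset.mul_sum, a, b]

-- Measuring `σ` in the product of the eigenbases of its marginals leaves those marginals'
-- spectra as the classical marginal distributions.
lemma vnEntropy_le_add_ptrace {σ : Matrix (m × n) (m × n) ℂ} (hσ : IsDensityMatrix σ) :
    vnEntropy σ ≤ vnEntropy (ptrace2 σ) + vnEntropy (ptrace1 σ) := by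
  have hA : (ptrace2 σ).IsHermitian := hσ.ptrace2.1.1
  have hB : (ptrace1 σ).IsHermitian := hσ.ptrace1.1.1
  set U : Matrix m m ℂ := (hA.eigenvectorUnitary : Matrix m m ℂ)ᴴ with hU_def
  set V : Matrix n n ℂ := (hB.eigenvectorUnitary : Matrix n n ℂ)ᴴ with hV_def
  have hU : U ∈ unitaryGroup m ℂ := Unitary.star_mem hA.eigenvectorUnitary.2
  have hV : V ∈ unitaryGroup n ℂ := Unitary.star_mem hB.eigenvectorUnitary.2
  have hK : IsBistochastic (fun _ : Unit ↦ U ⊗ₖ V) :=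
    isBistochastic_unit (kronecker_mem_unitary hU hV)
  set τ := krausMap (fun _ : Unit ↦ U ⊗ₖ V) σ with hτ_def
  have hτ2 : ptrace2 τ = diagonal fun i ↦ (hA.eigenvalues i : ℂ) := by
    rw [hτ_def, krausMap_unit, ptrace2_conj_kronecker (mem_unitaryGroup_iff'.1 hV),
      ← krausMap_unit, hU_def, krausMap_eigenvectorUnitary_conjTranspose]
  have hτ1 : ptrace1 τ = diagonal fun j ↦ (hB.eigenvalues j : ℂ) := by
    rw [hτ_def, krausMap_unit, ptrace1_conj_kronecker (mem_unitaryGroup_iff'.1 hU),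
      ← krausMap_unit, hV_def, krausMap_eigenvectorUnitary_conjTranspose]
  have hmarg2 : ∀ i, ∑ j, (τ (i, j) (i, j)).re = hA.eigenvalues i := by
    intro i
    simpa only [ptrace2, Complex.re_sum, diagonal_apply_eq, Complex.ofReal_re] using
      congrArg Complex.re (congrFun₂ hτ2 i i)
  have hmarg1 : ∀ j, ∑ i, (τ (i, j) (i, j)).re = hB.eigenvalues j := by
    intro j
    simpa only [ptrace1, Complex.re_sum, diagonal_apply_eq, Complex.ofReal_re] using
      congrArg Complex.re (congrFun₂ hτ1 j j)
  calc vnEntropy σ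
      ≤ shannonEntropy fun i ↦ (τ i i).re := vnEntropy_le_diag_krausMap hK hσ.1
    _ ≤ shannonEntropy (fun i ↦ ∑ j, (τ (i, j) (i, j)).re) +
          shannonEntropy (fun j ↦ ∑ i, (τ (i, j) (i, j)).re) :=
        shannonEntropy_le_add_marginals (hσ.krausMap hK.trace_preserving).re_diag_mem_stdSimplex
    _ = vnEntropy (ptrace2 σ) + vnEntropy (ptrace1 σ) := by
        simp only [hmarg2, hmarg1, vnEntropy_eq_shannonEntropy_eigenvalues hA,
          vnEntropy_eq_shannonEntropy_eigenvalues hB]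

end CompositeSystem

section FreeEnergy

variable {m n : Type*} [Fintype m] [Fintype n] [DecidableEq m] [DecidableEq n] {kT : ℝ}

lemma freeEnergy_krausMap_le {X : Type*} [Fintype X] (hkT : 0 ≤ kT) {K : X → Matrix n n ℂ}
    (hK : IsBistochastic K) {H : Matrix n n ℂ} (hH : ∀ x, Commute (K x) H) {ρ : Matrix n n ℂ}
    (hρ : ρ.PosSemidef) :
    freeEnergy kT H (krausMap K ρ) ≤ freeEnergy kT H ρ := by
  have hS := vnEntropy_le_vnEntropy_krausMap hK hρ
  rw [freeEnergy, freeEnergy, trace_mul_krausMap hK.trace_preserving hH]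
  gcongr

lemma freeEnergy_kroneckerSum_kronecker (A : Matrix m m ℂ) (B : Matrix n n ℂ)
    {ρ : Matrix m m ℂ} {τ : Matrix n n ℂ} (hρ : IsDensityMatrix ρ) (hτ : IsDensityMatrix τ) :
    freeEnergy kT (kroneckerSum A B) (ρ ⊗ₖ τ) = freeEnergy kT A ρ + freeEnergy kT B τ := by
  simp only [freeEnergy, trace_kroneckerSum_mul, ptrace2_kronecker, ptrace1_kronecker,
    vnEntropy_kronecker hρ.1.1 hτ.1.1, hρ.2, hτ.2, one_smul, Complex.one_re, one_mul,
    Complex.add_re]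
  ring

lemma freeEnergy_ptrace_add_le (hkT : 0 ≤ kT) (A : Matrix m m ℂ) (B : Matrix n n ℂ)
    {σ : Matrix (m × n) (m × n) ℂ} (hσ : IsDensityMatrix σ) :
    freeEnergy kT A (ptrace2 σ) + freeEnergy kT B (ptrace1 σ) ≤
      freeEnergy kT (kroneckerSum A B) σ := by
  have hS := mul_le_mul_of_nonneg_left (vnEntropy_le_add_ptrace hσ) hkT
  simp only [freeEnergy, trace_kroneckerSum_mul, Complex.add_re]
  linarith

lemma freeEnergy_ptrace_krausMap_add_le {l X : Type*} [Fintype l] [DecidableEq l] [Fintype X]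
    (hkT : 0 ≤ kT) {A : Matrix l l ℂ} {B : Matrix m m ℂ} {C : Matrix n n ℂ}
    {α : Matrix l l ℂ} {β : Matrix m m ℂ} {γ : Matrix n n ℂ} (hα : IsDensityMatrix α)
    (hβ : IsDensityMatrix β) (hγ : IsDensityMatrix γ)
    {K : X → Matrix (l × m × n) (l × m × n) ℂ} (hK : IsBistochastic K)
    (hKcomm : ∀ x, Commute (K x) (kroneckerSum A (kroneckerSum B C)))
    {σ : Matrix (l × m × n) (l × m × n) ℂ} (hσ : σ = krausMap K (α ⊗ₖ (β ⊗ₖ γ))) :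
    freeEnergy kT A (ptrace2 σ) + (freeEnergy kT B (ptrace2 (ptrace1 σ)) +
        freeEnergy kT C (ptrace1 (ptrace1 σ))) ≤
      freeEnergy kT A α + (freeEnergy kT B β + freeEnergy kT C γ) := by
  have hρ : IsDensityMatrix (α ⊗ₖ (β ⊗ₖ γ)) := hα.kronecker (hβ.kronecker hγ)
  have hσd : IsDensityMatrix σ := hσ ▸ hρ.krausMap hK.trace_preserving
  calc _ ≤ freeEnergy kT A (ptrace2 σ) + freeEnergy kT (kroneckerSum B C) (ptrace1 σ) := by
        gcongr; exact freeEnergy_ptrace_add_le hkT B C hσd.ptrace1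
    _ ≤ freeEnergy kT (kroneckerSum A (kroneckerSum B C)) σ :=
        freeEnergy_ptrace_add_le hkT A (kroneckerSum B C) hσd
    _ ≤ freeEnergy kT (kroneckerSum A (kroneckerSum B C)) (α ⊗ₖ (β ⊗ₖ γ)) :=
        hσ ▸ freeEnergy_krausMap_le hkT hK hKcomm hρ.1
    _ = freeEnergy kT A α + (freeEnergy kT B β + freeEnergy kT C γ) := by
        rw [freeEnergy_kroneckerSum_kronecker A _ hα (hβ.kronecker hγ),
          freeEnergy_kroneckerSum_kronecker B C hβ hγ]

end FreeEnergy

section Demon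

variable {w s d X : Type*} [Fintype w] [Fintype s] [Fintype d] [DecidableEq w] [DecidableEq s]

/-- Kraus operators of a demon's step: the whole system first evolves by `G`, then its third
factor is measured by `P`. The factor `Unit` of the index type carries the evolution, as a
one-element Kraus family. -/
def evolveMeasure (G : Matrix (w × s × d) (w × s × d) ℂ) (P : X → Matrix d d ℂ) :
    X × Unit → Matrix (w × s × d) (w × s × d) ℂ :=
  fun p ↦ (1 : Matrix w w ℂ) ⊗ₖ ((1 : Matrix s s ℂ) ⊗ₖ P p.1) * G

lemma krausMap_evolveMeasure [Fintype X] (G : Matrix (w × s × d) (w × s × d) ℂ)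
    {P : X → Matrix d d ℂ} (hP : ∀ x, (P x).IsHermitian) (ρ : Matrix (w × s × d) (w × s × d) ℂ) :
    krausMap (evolveMeasure G P) ρ =
      ∑ x, (1 : Matrix w w ℂ) ⊗ₖ ((1 : Matrix s s ℂ) ⊗ₖ P x) * (G * ρ * Gᴴ) *
        (1 : Matrix w w ℂ) ⊗ₖ ((1 : Matrix s s ℂ) ⊗ₖ P x) := by
  calc krausMap (evolveMeasure G P) ρ
      = krausMap (fun x ↦ (1 : Matrix w w ℂ) ⊗ₖ ((1 : Matrix s s ℂ) ⊗ₖ P x))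
          (krausMap (fun _ : Unit ↦ G) ρ) :=
        (krausMap_krausMap (fun x ↦ (1 : Matrix w w ℂ) ⊗ₖ ((1 : Matrix s s ℂ) ⊗ₖ P x))
          (fun _ : Unit ↦ G) ρ).symm
    _ = _ := by
        rw [krausMap_unit]
        simp only [krausMap, conjTranspose_kronecker, conjTranspose_one, (hP _).eq]

variable [DecidableEq d] {G : Matrix (w × s × d) (w × s × d) ℂ} {P : X → Matrix d d ℂ}

lemma isBistochastic_evolveMeasure [Fintype X] (hG : G ∈ unitaryGroup (w × s × d) ℂ)
    (hP : ∀ x, IsStarProjection (P x)) (hsum : ∑ x, P x = 1) :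
    IsBistochastic (evolveMeasure G P) :=
  (isBistochastic_of_isStarProjection hP hsum).one_kronecker.one_kronecker.mul
    (isBistochastic_unit hG)

lemma commute_evolveMeasure {A : Matrix w w ℂ} {B : Matrix s s ℂ} {C : Matrix d d ℂ}
    (hG : Commute G (kroneckerSum A (kroneckerSum B C))) (hP : ∀ x, Commute (P x) C)
    (p : X × Unit) : Commute (evolveMeasure G P p) (kroneckerSum A (kroneckerSum B C)) :=
  (commute_one_kronecker_kroneckerSum A
    (commute_one_kronecker_kroneckerSum B (hP p.1))).mul_left hG

end Demon

theorem net_coarse_grained_work_second_law_general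
    {w s d X : Type*} [Fintype w] [Fintype s] [Fintype d] [Fintype X]
    [DecidableEq w] [DecidableEq s] [DecidableEq d]
    (HW : Matrix w w ℂ) (HS : Matrix s s ℂ) (HD : Matrix d d ℂ) {kT : ℝ} (hkT : 0 ≤ kT)
    {ρW : Matrix w w ℂ} (hρW : IsDensityMatrix ρW)
    {ρS : Matrix s s ℂ} (hρS : IsDensityMatrix ρS)
    {ρD : Matrix d d ℂ} (hρD : IsDensityMatrix ρD)
    {K : X → Matrix (w × s × d) (w × s × d) ℂ} (hK : IsBistochastic K)
    (hKcomm : ∀ x, Commute (K x) (kroneckerSum HW (kroneckerSum HS HD)))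
    {σ : Matrix (w × s × d) (w × s × d) ℂ} (hσ : σ = krausMap K (ρW ⊗ₖ (ρS ⊗ₖ ρD)))
    {Q : ℝ} (hQ : kT * (vnEntropy (ptrace1 (ptrace1 σ)) - vnEntropy ρD) ≤ Q) :
    (freeEnergy kT HW (ptrace2 σ) - freeEnergy kT HW ρW)
      - ((Matrix.trace (HD * (ρD - ptrace1 (ptrace1 σ)))).re + Q)
    ≤ freeEnergy kT HS ρS - freeEnergy kT HS (ptrace2 (ptrace1 σ)) := by
  have h := freeEnergy_ptrace_krausMap_add_le hkT hρW hρS hρD hK hKcomm hσ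
  simp only [freeEnergy, mul_sub, trace_sub, Complex.sub_re] at h hQ ⊢
  linarith

/-- Eq. (50): the net coarse-grained work extracted per cycle, after paying the
Landauer erasure cost of the demon's memory, is bounded by the free-energy
decrease of the system. -/
theorem net_coarse_grained_work_second_law
    {dW dS dD : ℕ} {X : Type*} [Fintype X]
    (HW : Matrix (Fin dW) (Fin dW) ℂ) (HS : Matrix (Fin dS) (Fin dS) ℂ)
    (HD : Matrix (Fin dD) (Fin dD) ℂ)
    (hHW : HW.IsHermitian) (hHS : HS.IsHermitian) (hHD : HD.IsHermitian)
    (kT : ℝ) (hkT : 0 < kT)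
    (ρW : Matrix (Fin dW) (Fin dW) ℂ) (hρW : IsDensityMatrix ρW)
    (ρS : Matrix (Fin dS) (Fin dS) ℂ) (hρS : IsDensityMatrix ρS)
    (ψ : Fin dD → ℂ) (hψ : star ψ ⬝ᵥ ψ = 1)
    (P : X → Matrix (Fin dD) (Fin dD) ℂ)
    (hPherm : ∀ x, (P x).IsHermitian)
    (hPidem : ∀ x, P x * P x = P x)
    (hPorth : ∀ x y, x ≠ y → P x * P y = 0)
    (hPsum : ∑ x, P x = 1)
    (hPcomm : ∀ x, P x * HD = HD * P x)
    (G : Matrix (Fin dW × Fin dS × Fin dD) (Fin dW × Fin dS × Fin dD) ℂ)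
    (hG : G ∈ Matrix.unitaryGroup (Fin dW × Fin dS × Fin dD) ℂ)
    (hGcomm : G * (HW ⊗ₖ ((1 : Matrix (Fin dS) (Fin dS) ℂ) ⊗ₖ (1 : Matrix (Fin dD) (Fin dD) ℂ))
        + (1 : Matrix (Fin dW) (Fin dW) ℂ) ⊗ₖ (HS ⊗ₖ (1 : Matrix (Fin dD) (Fin dD) ℂ))
        + (1 : Matrix (Fin dW) (Fin dW) ℂ) ⊗ₖ ((1 : Matrix (Fin dS) (Fin dS) ℂ) ⊗ₖ HD))
      = (HW ⊗ₖ ((1 : Matrix (Fin dS) (Fin dS) ℂ) ⊗ₖ (1 : Matrix (Fin dD) (Fin dD) ℂ))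
        + (1 : Matrix (Fin dW) (Fin dW) ℂ) ⊗ₖ (HS ⊗ₖ (1 : Matrix (Fin dD) (Fin dD) ℂ))
        + (1 : Matrix (Fin dW) (Fin dW) ℂ) ⊗ₖ ((1 : Matrix (Fin dS) (Fin dS) ℂ) ⊗ₖ HD)) * G)
    (σ : Matrix (Fin dW × Fin dS × Fin dD) (Fin dW × Fin dS × Fin dD) ℂ)
    (hσ : σ = ∑ x, ((1 : Matrix (Fin dW) (Fin dW) ℂ) ⊗ₖ
            ((1 : Matrix (Fin dS) (Fin dS) ℂ) ⊗ₖ P x))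
        * (G * (ρW ⊗ₖ (ρS ⊗ₖ outer ψ)) * Gᴴ)
        * ((1 : Matrix (Fin dW) (Fin dW) ℂ) ⊗ₖ
            ((1 : Matrix (Fin dS) (Fin dS) ℂ) ⊗ₖ P x)))
    (Q : ℝ) (hQ : kT * vnEntropy (ptrace1 (ptrace1 σ)) ≤ Q) :
    (freeEnergy kT HW (ptrace2 σ) - freeEnergy kT HW ρW)
      - ((Matrix.trace (HD * (outer ψ - ptrace1 (ptrace1 σ)))).re + Q)
    ≤ freeEnergy kT HS ρS - freeEnergy kT HS (ptrace2 (ptrace1 σ)) := by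
  have hS := vnEntropy_eq_zero_of_isStarProjection (isStarProjection_outer hψ)
  exact net_coarse_grained_work_second_law_general HW HS HD hkT.le hρW hρS
    (isDensityMatrix_outer hψ)
    (isBistochastic_evolveMeasure hG (fun x ↦ ⟨hPidem x, hPherm x⟩) hPsum)
    (commute_evolveMeasure (by rwa [kroneckerSum_kroneckerSum]) hPcomm)
    (hσ.trans (krausMap_evolveMeasure G hPherm _).symm) (by rwa [hS, sub_zero])
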